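/- Let E = EuclideanSpace ℝ (Fin N), let U ⊆ E be open and convex, and let f : U → ℝ be three times continuously differentiable with ‖iteratedFDeriv ℝ 3 f z‖ ≤ K for all z ∈ U. Let W : E →ₗ[ℝ] E be self-adjoint with constants 0 < μ and Λ such that μ‖δ‖² ≤ ⟪δ, W δ⟫ and ‖W δ‖ ≤ Λ‖δ‖ for all δ ∈ E. Define the Gonzalez flux G_GS(a,b) := ∇f((a+b)/2) + ((f(b) − f(a) − ⟪∇f((a+b)/2), b−a⟫)/⟪b−a, W(b−a)⟫) • W(b−a) for a ≠ b. Then for all a ≠ b in U with [a,b] ⊆ U, ‖G_GS(a,b) − ∇f((a+b)/2)‖ ≤ (K Λ/(24 μ)) ‖b − a‖². -/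

import Mathlib

/-!
Put `m = (a + b) / 2`, `d = b - a` and `g t = f (m + t d)` for `|t| ≤ 1/2`. The odd part
`φ t = g t - g (-t) - 2 t g' 0` satisfies `φ 0 = φ' 0 = φ'' 0 = 0` and
`|φ'''| ≤ 2 K ‖d‖ ^ 3`, so three integrations give `|φ (1/2)| ≤ K ‖d‖ ^ 3 / 24`
(`abs_sub_sub_midpoint_deriv_le`): the numerator `f b - f a - ⟪∇f m, d⟫` of the flux correction
is of third order. Since `‖W d‖ / ⟪d, W d⟫ ≤ Λ / (μ ‖d‖)`, the correction itself is bounded by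
`K Λ / (24 μ) ‖d‖ ^ 2`.
-/

open RealInnerProductSpace

/-- Error bound for the midpoint rule applied to `g1 = g0'` on `[-1/2, 1/2]`, with the sharp
constant `1/24`. -/
lemma abs_sub_sub_midpoint_deriv_le {g0 g1 g2 g3 : ℝ → ℝ} {C : ℝ}
    (h0 : ∀ t ∈ Set.Icc (-1 / 2 : ℝ) (1 / 2), HasDerivAt g0 (g1 t) t)
    (h1 : ∀ t ∈ Set.Icc (-1 / 2 : ℝ) (1 / 2), HasDerivAt g1 (g2 t) t)
    (h2 : ∀ t ∈ Set.Icc (-1 / 2 : ℝ) (1 / 2), HasDerivAt g2 (g3 t) t)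
    (h3 : ∀ t ∈ Set.Icc (-1 / 2 : ℝ) (1 / 2), |g3 t| ≤ C) :
    |g0 (1 / 2) - g0 (-1 / 2) - g1 0| ≤ C / 24 := by
  have mem : ∀ t ∈ Set.Icc (0 : ℝ) (1 / 2),
      t ∈ Set.Icc (-1 / 2 : ℝ) (1 / 2) ∧ -t ∈ Set.Icc (-1 / 2 : ℝ) (1 / 2) := by
    rintro t ⟨ht0, ht1⟩
    refine ⟨⟨?_, ?_⟩, ⟨?_, ?_⟩⟩ <;> linarith
  have refl_deriv : ∀ {u u' : ℝ → ℝ}, ∀ t : ℝ, HasDerivAt u (u' (-t)) (-t) →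
      HasDerivAt (fun s => u (-s)) (-u' (-t)) t := by
    intro u u' t hu
    simpa [Function.comp_def] using hu.comp t (hasDerivAt_neg t)
  -- one integration step: a derivative bound by `B'` on `[0, 1/2]` gives a bound by `B`
  have step : ∀ {u u' B B' : ℝ → ℝ},
      (∀ t ∈ Set.Icc (0 : ℝ) (1 / 2), HasDerivAt u (u' t) t) → u 0 = 0 → B 0 = 0 →
      (∀ t, HasDerivAt B (B' t) t) →
      (∀ t ∈ Set.Icc (0 : ℝ) (1 / 2), |u' t| ≤ B' t) →
      ∀ t ∈ Set.Icc (0 : ℝ) (1 / 2), |u t| ≤ B t := by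
    intro u u' B B' hu hu0 hB0 hB hb t ht
    refine image_norm_le_of_norm_deriv_right_le_deriv_boundary (f := u) (f' := u')
      (fun s hs => (hu s hs).continuousAt.continuousWithinAt)
      (fun s hs => (hu s ⟨hs.1, hs.2.le⟩).hasDerivWithinAt) (by simp [hu0, hB0]) hB
      (fun s hs => hb s ⟨hs.1, hs.2.le⟩) ht
  have b2 : ∀ t ∈ Set.Icc (0 : ℝ) (1 / 2), |g2 t - g2 (-t)| ≤ 2 * C * t := by
    refine step (u := fun t => g2 t - g2 (-t)) (u' := fun t => g3 t + g3 (-t))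
      (B := fun t => 2 * C * t) (B' := fun _ => 2 * C) ?_ (by simp) (by simp) ?_ ?_
    · intro t ht
      have := (h2 t (mem t ht).1).sub (refl_deriv t (h2 (-t) (mem t ht).2))
      exact this.congr_deriv (by ring)
    · intro t
      simpa using (hasDerivAt_id t).const_mul (2 * C)
    · intro t ht
      have := abs_add_le (g3 t) (g3 (-t))
      linarith [h3 t (mem t ht).1, h3 (-t) (mem t ht).2]
  have b1 : ∀ t ∈ Set.Icc (0 : ℝ) (1 / 2), |g1 t + g1 (-t) - 2 * g1 0| ≤ C * t ^ 2 := by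
    refine step (u := fun t => g1 t + g1 (-t) - 2 * g1 0) (u' := fun t => g2 t - g2 (-t))
      (B := fun t => C * t ^ 2) (B' := fun t => 2 * C * t) ?_ (by simp; ring) (by simp) ?_ b2
    · intro t ht
      have := ((h1 t (mem t ht).1).add (refl_deriv t (h1 (-t) (mem t ht).2))).sub_const (2 * g1 0)
      exact this.congr_deriv (by ring)
    · intro t
      exact ((hasDerivAt_pow 2 t).const_mul C).congr_deriv (by simp; ring)
  have b0 : ∀ t ∈ Set.Icc (0 : ℝ) (1 / 2),
      |g0 t - g0 (-t) - 2 * g1 0 * t| ≤ C / 3 * t ^ 3 := by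
    refine step (u := fun t => g0 t - g0 (-t) - 2 * g1 0 * t)
      (u' := fun t => g1 t + g1 (-t) - 2 * g1 0)
      (B := fun t => C / 3 * t ^ 3) (B' := fun t => C * t ^ 2) ?_ (by simp) (by simp) ?_ b1
    · intro t ht
      have := ((h0 t (mem t ht).1).sub (refl_deriv t (h0 (-t) (mem t ht).2))).sub
        ((hasDerivAt_id t).const_mul (2 * g1 0))
      exact this.congr_deriv (by ring)
    · intro t
      exact ((hasDerivAt_pow 3 t).const_mul (C / 3)).congr_deriv (by simp; ring)
  have key := b0 (1 / 2) ⟨by norm_num, le_rfl⟩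
  have e1 : g0 (1 / 2) - g0 (-(1 / 2)) - 2 * g1 0 * (1 / 2) =
      g0 (1 / 2) - g0 (-1 / 2) - g1 0 := by
    rw [show (-1 / 2 : ℝ) = -(1 / 2) by norm_num]; ring
  rw [e1] at key
  linarith

/-- Differentiating the `n`-th directional derivative along a line gives the `(n + 1)`-st. -/
lemma hasDerivAt_iteratedFDeriv_line {E : Type*} [NormedAddCommGroup E] [NormedSpace ℝ E]
    {f : E → ℝ} {m d : E} {t : ℝ} {n : ℕ}
    (hf : DifferentiableAt ℝ (iteratedFDeriv ℝ n f) (m + t • d)) :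
    HasDerivAt (fun s : ℝ => iteratedFDeriv ℝ n f (m + s • d) (fun _ => d))
      (iteratedFDeriv ℝ (n + 1) f (m + t • d) (fun _ => d)) t := by
  have hline : HasDerivAt (fun s : ℝ => m + s • d) d t := by
    simpa using ((hasDerivAt_id t).smul_const d).const_add m
  have hcomp := hf.hasFDerivAt.comp_hasDerivAt t hline
  have := ((ContinuousMultilinearMap.apply ℝ (fun _ : Fin n => E) ℝ
    (fun _ => d)).hasFDerivAt).comp_hasDerivAt t hcomp
  rw [iteratedFDeriv_succ_apply_left]
  exact this

/-- Second-order consistency of the Gonzalez flux: under a third-derivative bound `K`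
on `U` and spectral bounds `μ‖δ‖² ≤ ⟪δ, W δ⟫` and `‖W δ‖ ≤ Λ‖δ‖`, the Gonzalez flux
deviates from the midpoint gradient by at most `(K Λ/(24 μ))‖b − a‖²`. -/
theorem gonzalezFlux_second_order_consistency (N : ℕ)
    (U : Set (EuclideanSpace ℝ (Fin N))) (hU_open : IsOpen U) (hU_conv : Convex ℝ U)
    (f : EuclideanSpace ℝ (Fin N) → ℝ) (hf : ContDiffOn ℝ 3 f U)
    (K : ℝ) (hK : ∀ z ∈ U, ‖iteratedFDeriv ℝ 3 f z‖ ≤ K)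
    (W : EuclideanSpace ℝ (Fin N) →ₗ[ℝ] EuclideanSpace ℝ (Fin N))
    (hW_sa : ∀ x y : EuclideanSpace ℝ (Fin N), ⟪W x, y⟫ = ⟪x, W y⟫)
    (μ Λ : ℝ) (hμ : 0 < μ)
    (hW_lower : ∀ δ : EuclideanSpace ℝ (Fin N), μ * ‖δ‖ ^ 2 ≤ ⟪δ, W δ⟫)
    (hW_upper : ∀ δ : EuclideanSpace ℝ (Fin N), ‖W δ‖ ≤ Λ * ‖δ‖) :
    ∀ a b : EuclideanSpace ℝ (Fin N), a ≠ b → a ∈ U → b ∈ U → segment ℝ a b ⊆ U →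
      ‖(gradient f ((2 : ℝ)⁻¹ • (a + b)) +
          ((f b - f a - ⟪gradient f ((2 : ℝ)⁻¹ • (a + b)), b - a⟫) /
              ⟪b - a, W (b - a)⟫) • W (b - a)) -
        gradient f ((2 : ℝ)⁻¹ • (a + b))‖ ≤
      K * Λ / (24 * μ) * ‖b - a‖ ^ 2 := by
  intro a b hab _ _ hseg
  rw [add_sub_cancel_left, norm_smul, Real.norm_eq_abs, abs_div]
  set m := (2 : ℝ)⁻¹ • (a + b) with hm
  set d := b - a with hd
  have hd0 : 0 < ‖d‖ := norm_pos_iff.mpr (sub_ne_zero.mpr hab.symm)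
  have hmem : ∀ t ∈ Set.Icc (-1 / 2 : ℝ) (1 / 2), m + t • d ∈ U := by
    rintro t ⟨ht0, ht1⟩
    refine hseg ⟨1 / 2 - t, 1 / 2 + t, by linarith, by linarith, by ring, ?_⟩
    rw [hm, hd]; module
  have hcd : ∀ t ∈ Set.Icc (-1 / 2 : ℝ) (1 / 2), ContDiffAt ℝ 3 f (m + t • d) :=
    fun t ht => hf.contDiffAt (hU_open.mem_nhds (hmem t ht))
  have hder : ∀ n : ℕ, n < 3 → ∀ t ∈ Set.Icc (-1 / 2 : ℝ) (1 / 2),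
      HasDerivAt (fun s : ℝ => iteratedFDeriv ℝ n f (m + s • d) (fun _ => d))
        (iteratedFDeriv ℝ (n + 1) f (m + t • d) (fun _ => d)) t := fun n hn t ht =>
    hasDerivAt_iteratedFDeriv_line
      ((hcd t ht).differentiableAt_iteratedFDeriv (by exact_mod_cast hn))
  have htaylor := abs_sub_sub_midpoint_deriv_le (C := K * ‖d‖ ^ 3)
    (hder 0 (by norm_num)) (hder 1 (by norm_num)) (hder 2 (by norm_num)) (by
      intro t ht
      refine ((iteratedFDeriv ℝ 3 f (m + t • d)).le_opNorm (fun _ => d)).trans ?_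
      simp only [Finset.prod_const, Finset.card_univ, Fintype.card_fin]
      gcongr
      exact hK _ (hmem t ht))
  have hb : m + (1 / 2 : ℝ) • d = b := by rw [hm, hd]; module
  have ha : m + (-1 / 2 : ℝ) • d = a := by rw [hm, hd]; module
  have hgrad : ⟪gradient f m, d⟫ = fderiv ℝ f m d := by
    simp [gradient]
  simp only [iteratedFDeriv_zero_apply, hb, ha, zero_smul, add_zero] at htaylor
  have hone : iteratedFDeriv ℝ (0 + 1) f m (fun _ => d) = fderiv ℝ f m d :=
    iteratedFDeriv_one_apply _
  rw [hone, ← hgrad] at htaylor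
  have hlow := hW_lower d
  have hup := hW_upper d
  have hpos : 0 < μ * ‖d‖ ^ 2 := by positivity
  rw [abs_of_pos (hpos.trans_le hlow)]
  have hnum : 0 ≤ K * ‖d‖ ^ 3 / 24 := (abs_nonneg _).trans htaylor
  calc _ ≤ K * ‖d‖ ^ 3 / 24 / (μ * ‖d‖ ^ 2) * (Λ * ‖d‖) := by gcongr
    _ = K * Λ / (24 * μ) * ‖d‖ ^ 2 := by field_simp
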